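/- There exist an absolute constant C' > 0 and, for each γ ∈ (0,1), a constant c(γ) > 0 such that the following holds. Fix integers m ≥ 2 and 0 ≤ m' ≤ m(m−1), dimensions d ≥ 1 and D_K = Σ_{k=1}^h d_k. Suppose there exist fixed embeddings x_1,…,x_m ∈ ℝ^d with ‖x_v‖₂ ≤ 1 such that for every directed loop-free graph G on {1,…,m} with exactly m' edges there exist U = [U_1|…|U_h], V = [V_1|…|V_h] with U_k, V_k ∈ ℝ^{d×d_k}, ‖U‖_F ≤ 1, ‖V‖_F ≤ 1, and τ ∈ [−1,1] recovering G with margin γ (i.e., max_k x_uᵀ U_k V_kᵀ x_v ≥ τ + γ for every edge (u,v) of G, and ≤ τ − γ for every ordered non-edge with u ≠ v). Then binom(m(m−1), m') ≤ (C'/γ)^{2·d·D_K + 1}; equivalently, d·D_K ≥ c(γ)·log binom(m(m−1), m') − O(1), so D_K = Ω((m'/d)·log(m²/m')). -/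

import Mathlib

/-!
For unit embeddings the scores are Lipschitz in the parameters `(U, V, τ)`, with Frobenius norms on
`U` and `V`, so parameters that recover two different graphs with margin `γ` must lie at distance at
least `2γ / 3`. All parameters live in the unit ball of a real normed space of dimension
`2 d D_K + 1`, and comparing volumes of disjoint balls bounds the number of recoverable graphs by
`(1 + 3 / γ) ^ (2 d D_K + 1)`.
-/

open Matrix

/-- Squared Frobenius norm of a real matrix. -/
def frobSq {n m : ℕ} (A : Matrix (Fin n) (Fin m) ℝ) : ℝ := ∑ i, ∑ j, A i j ^ 2

/-- The edge set `E` is recovered with margin `γ` by the QK parameters `(U, V, τ)` over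
the embeddings `x`: every edge has max-over-heads score `max_k x_uᵀ U_k V_kᵀ x_v ≥ τ + γ`
and every ordered loop-free non-edge has all head scores `≤ τ − γ`. -/
def Recovers {m d h : ℕ} {dk : Fin h → ℕ} (x : Fin m → Fin d → ℝ)
    (U V : ∀ k : Fin h, Matrix (Fin d) (Fin (dk k)) ℝ) (τ γ : ℝ)
    (E : Finset (Fin m × Fin m)) : Prop :=
  (∀ e ∈ E, ∃ k, τ + γ ≤ Matrix.vecMul (x e.1) (U k) ⬝ᵥ Matrix.vecMul (x e.2) (V k)) ∧
  (∀ u v : Fin m, u ≠ v → (u, v) ∉ E →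
    ∀ k, Matrix.vecMul (x u) (U k) ⬝ᵥ Matrix.vecMul (x v) (V k) ≤ τ - γ)

open MeasureTheory Metric Module in
theorem card_le_pow_finrank_of_separated {E ι : Type*} [NormedAddCommGroup E] [NormedSpace ℝ E]
    [FiniteDimensional ℝ E] {s : Finset ι} {f : ι → E} {c : E} {R ε : ℝ} (hR : 0 ≤ R) (hε : 0 < ε)
    (hf : ∀ i ∈ s, f i ∈ closedBall c R)
    (hsep : (s : Set ι).Pairwise fun i j => ε ≤ dist (f i) (f j)) :
    (s.card : ℝ) ≤ (1 + 2 * R / ε) ^ finrank ℝ E := by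
  borelize E
  let μ : Measure E := Measure.addHaar
  have volume_ball (x : E) {r : ℝ} (hr : 0 < r) :
      μ.real (ball x r) = r ^ finrank ℝ E * μ.real (ball 0 1) := by
    rw [measureReal_def, μ.addHaar_ball_of_pos x hr, ENNReal.toReal_mul,
      ENNReal.toReal_ofReal (by positivity), measureReal_def]
  have disjoint_balls :
      (s : Set ι).PairwiseDisjoint fun i => ball (f i) (ε / 2) := fun i hi j hj hij =>
    ball_disjoint_ball (by linarith [hsep hi hj hij])
  have balls_subset : ⋃ i ∈ s, ball (f i) (ε / 2) ⊆ ball c (R + ε / 2) :=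
    Set.iUnion₂_subset fun i hi => ball_subset_ball' (by linarith [mem_closedBall.1 (hf i hi)])
  have volume_le : s.card * (ε / 2) ^ finrank ℝ E * μ.real (ball 0 1)
      ≤ (R + ε / 2) ^ finrank ℝ E * μ.real (ball 0 1) :=
    calc s.card * (ε / 2) ^ finrank ℝ E * μ.real (ball 0 1)
        = ∑ i ∈ s, μ.real (ball (f i) (ε / 2)) := by
          simp only [volume_ball _ (half_pos hε), Finset.sum_const, nsmul_eq_mul, mul_assoc]
      _ = μ.real (⋃ i ∈ s, ball (f i) (ε / 2)) :=
          (measureReal_biUnion_finset disjoint_balls fun _ _ => measurableSet_ball).symm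
      _ ≤ μ.real (ball c (R + ε / 2)) := measureReal_mono balls_subset
      _ = (R + ε / 2) ^ finrank ℝ E * μ.real (ball 0 1) := volume_ball c (by positivity)
  have unit_ball_pos : 0 < μ.real (ball (0 : E) 1) :=
    ENNReal.toReal_pos (measure_ball_pos μ 0 one_pos).ne' measure_ball_lt_top.ne
  have ratio : 1 + 2 * R / ε = (R + ε / 2) / (ε / 2) := by field_simp; ring
  rw [ratio, div_pow, le_div_iff₀ (by positivity)]
  exact le_of_mul_le_mul_right volume_le unit_ball_pos

section FrobeniusNorm

open scoped Matrix.Norms.Frobenius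
open WithLp

section RCLike

variable {𝕜 l m n : Type*} [RCLike 𝕜] [Fintype l] [Fintype m] [Fintype n]

theorem norm_dotProduct_le (u v : n → 𝕜) : ‖u ⬝ᵥ v‖ ≤ ‖toLp 2 u‖ * ‖toLp 2 v‖ := by
  have h := norm_inner_le_norm (𝕜 := 𝕜) (toLp 2 (star v)) (toLp 2 u)
  rw [EuclideanSpace.inner_toLp_toLp, star_star] at h
  simpa [EuclideanSpace.norm_eq, mul_comm] using h

theorem norm_toLp_vecMul_le (x : m → 𝕜) (A : Matrix m n 𝕜) :
    ‖toLp 2 (x ᵥ* A)‖ ≤ ‖toLp 2 x‖ * ‖A‖ := by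
  rw [← frobenius_norm_replicateRow (ι := Unit), replicateRow_vecMul,
    ← frobenius_norm_replicateRow (ι := Unit)]
  exact frobenius_norm_mul _ _

theorem norm_vecMul_dotProduct_vecMul_le (x : l → 𝕜) (y : m → 𝕜) (A : Matrix l n 𝕜)
    (B : Matrix m n 𝕜) :
    ‖(x ᵥ* A) ⬝ᵥ (y ᵥ* B)‖ ≤ ‖toLp 2 x‖ * ‖toLp 2 y‖ * (‖A‖ * ‖B‖) :=
  calc ‖(x ᵥ* A) ⬝ᵥ (y ᵥ* B)‖
      ≤ ‖toLp 2 (x ᵥ* A)‖ * ‖toLp 2 (y ᵥ* B)‖ := norm_dotProduct_le _ _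
    _ ≤ (‖toLp 2 x‖ * ‖A‖) * (‖toLp 2 y‖ * ‖B‖) := by
        gcongr <;> exact norm_toLp_vecMul_le _ _
    _ = ‖toLp 2 x‖ * ‖toLp 2 y‖ * (‖A‖ * ‖B‖) := mul_mul_mul_comm _ _ _ _

theorem norm_vecMul_dotProduct_vecMul_sub_le (x : l → 𝕜) (y : m → 𝕜) (A A' : Matrix l n 𝕜)
    (B B' : Matrix m n 𝕜) :
    ‖(x ᵥ* A) ⬝ᵥ (y ᵥ* B) - (x ᵥ* A') ⬝ᵥ (y ᵥ* B')‖ ≤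
      ‖toLp 2 x‖ * ‖toLp 2 y‖ * (‖A - A'‖ * ‖B‖ + ‖A'‖ * ‖B - B'‖) := by
  have telescope : (x ᵥ* A) ⬝ᵥ (y ᵥ* B) - (x ᵥ* A') ⬝ᵥ (y ᵥ* B') =
      (x ᵥ* (A - A')) ⬝ᵥ (y ᵥ* B) + (x ᵥ* A') ⬝ᵥ (y ᵥ* (B - B')) := by
    simp only [vecMul_sub, sub_dotProduct, dotProduct_sub, sub_add_sub_cancel]
  rw [telescope, mul_add]
  exact norm_add_le_of_le (norm_vecMul_dotProduct_vecMul_le _ _ _ _)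
    (norm_vecMul_dotProduct_vecMul_le _ _ _ _)

end RCLike

theorem frobenius_norm_sq_eq_frobSq {m n : ℕ} (A : Matrix (Fin m) (Fin n) ℝ) :
    ‖A‖ ^ 2 = frobSq A := by
  have h : 0 ≤ ∑ i, ∑ j, A i j ^ 2 := by positivity
  simp only [frobenius_norm_def, Real.norm_eq_abs, Real.rpow_two, sq_abs, ← Real.sqrt_eq_rpow,
    Real.sq_sqrt h, frobSq]

/-- The block matrices `[U_1 | … | U_h]` of per-head projections. The `ℓ²` norm of the Frobenius
norms of the blocks is the Frobenius norm of the whole matrix. -/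
abbrev HeadMatrices (d : ℕ) {h : ℕ} (dk : Fin h → ℕ) : Type :=
  PiLp 2 fun k => Matrix (Fin d) (Fin (dk k)) ℝ

/-- The parameters `(U, V, τ)` of a QK channel, with the sup norm of the product, so that the
normalization `‖U‖_F, ‖V‖_F, |τ| ≤ 1` describes the closed unit ball. -/
abbrev QKParams (d : ℕ) {h : ℕ} (dk : Fin h → ℕ) : Type :=
  HeadMatrices d dk × HeadMatrices d dk × ℝ

variable {m d h : ℕ} {dk : Fin h → ℕ}

theorem HeadMatrices.norm_eq (U : HeadMatrices d dk) : ‖U‖ = √(∑ k, frobSq (U k)) := by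
  simp only [PiLp.norm_eq_of_L2, frobenius_norm_sq_eq_frobSq]

theorem HeadMatrices.finrank_eq : Module.finrank ℝ (HeadMatrices d dk) = d * ∑ k, dk k := by
  rw [(WithLp.linearEquiv 2 ℝ _).finrank_eq, Module.finrank_pi_fintype]
  simp [Module.finrank_matrix, Finset.mul_sum]

theorem QKParams.finrank_eq : Module.finrank ℝ (QKParams d dk) = 2 * d * (∑ k, dk k) + 1 := by
  simp only [Module.finrank_prod, HeadMatrices.finrank_eq, Module.finrank_self]
  ring

theorem norm_score_sub_score_le {x y : Fin d → ℝ} (hx : ‖toLp 2 x‖ ≤ 1) (hy : ‖toLp 2 y‖ ≤ 1)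
    {U U' V V' : HeadMatrices d dk} (hV : ‖V‖ ≤ 1) (hU' : ‖U'‖ ≤ 1) (k : Fin h) :
    ‖(x ᵥ* U k) ⬝ᵥ (y ᵥ* V k) - (x ᵥ* U' k) ⬝ᵥ (y ᵥ* V' k)‖ ≤ ‖U - U'‖ + ‖V - V'‖ :=
  calc ‖(x ᵥ* U k) ⬝ᵥ (y ᵥ* V k) - (x ᵥ* U' k) ⬝ᵥ (y ᵥ* V' k)‖
      ≤ ‖toLp 2 x‖ * ‖toLp 2 y‖ * (‖U k - U' k‖ * ‖V k‖ + ‖U' k‖ * ‖V k - V' k‖) :=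
        norm_vecMul_dotProduct_vecMul_sub_le _ _ _ _ _ _
    _ ≤ 1 * 1 * (‖U - U'‖ * 1 + 1 * ‖V - V'‖) := by
        gcongr
        · exact PiLp.norm_apply_le (U - U') k
        · exact (PiLp.norm_apply_le V k).trans hV
        · exact (PiLp.norm_apply_le U' k).trans hU'
        · exact PiLp.norm_apply_le (V - V') k
    _ = ‖U - U'‖ + ‖V - V'‖ := by ring

variable {x : Fin m → Fin d → ℝ} {γ : ℝ} {E F : Finset (Fin m × Fin m)}

theorem two_mul_margin_le_of_mem_of_notMem (hx : ∀ v, ‖toLp 2 (x v)‖ ≤ 1) {θ θ' : QKParams d dk}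
    (hθ : ‖θ‖ ≤ 1) (hθ' : ‖θ'‖ ≤ 1) (hE : Recovers x θ.1.ofLp θ.2.1.ofLp θ.2.2 γ E)
    (hF : Recovers x θ'.1.ofLp θ'.2.1.ofLp θ'.2.2 γ F) {e : Fin m × Fin m} (he : e.1 ≠ e.2)
    (heE : e ∈ E) (heF : e ∉ F) : 2 * γ ≤ 3 * dist θ θ' := by
  obtain ⟨k, edge_score⟩ := hE.1 e heE
  have nonedge_score := hF.2 e.1 e.2 he heF k
  have hV : ‖θ.2.1‖ ≤ 1 := (norm_fst_le θ.2).trans ((norm_snd_le θ).trans hθ)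
  have score_change := (Real.le_norm_self _).trans <| norm_score_sub_score_le (hx e.1) (hx e.2)
    (U := θ.1) (V' := θ'.2.1) hV ((norm_fst_le θ').trans hθ') k
  have dist_U : ‖θ.1 - θ'.1‖ ≤ dist θ θ' := dist_eq_norm θ θ' ▸ norm_fst_le (θ - θ')
  have dist_rest : ‖θ.2 - θ'.2‖ ≤ dist θ θ' := dist_eq_norm θ θ' ▸ norm_snd_le (θ - θ')
  have dist_V : ‖θ.2.1 - θ'.2.1‖ ≤ dist θ θ' := (norm_fst_le (θ.2 - θ'.2)).trans dist_rest
  have dist_τ : |θ.2.2 - θ'.2.2| ≤ dist θ θ' := (norm_snd_le (θ.2 - θ'.2)).trans dist_rest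
  linarith [neg_le_of_abs_le dist_τ]

theorem two_mul_margin_le_of_ne (hx : ∀ v, ‖toLp 2 (x v)‖ ≤ 1) {θ θ' : QKParams d dk}
    (hθ : ‖θ‖ ≤ 1) (hθ' : ‖θ'‖ ≤ 1) (hE : Recovers x θ.1.ofLp θ.2.1.ofLp θ.2.2 γ E)
    (hF : Recovers x θ'.1.ofLp θ'.2.1.ofLp θ'.2.2 γ F) (hE_loopless : ∀ e ∈ E, e.1 ≠ e.2)
    (hF_loopless : ∀ e ∈ F, e.1 ≠ e.2) (hEF : E ≠ F) : 2 * γ ≤ 3 * dist θ θ' := by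
  by_cases h : E ⊆ F
  · obtain ⟨e, heF, heE⟩ := Finset.not_subset.1 fun h' => hEF (h.antisymm h')
    rw [dist_comm]
    exact two_mul_margin_le_of_mem_of_notMem hx hθ' hθ hF hE (hF_loopless e heF) heF heE
  · obtain ⟨e, heE, heF⟩ := Finset.not_subset.1 h
    exact two_mul_margin_le_of_mem_of_notMem hx hθ hθ' hE hF (hE_loopless e heE) heE heF

theorem card_le_pow_of_forall_recovers (hx : ∀ v, ‖toLp 2 (x v)‖ ≤ 1) (hγ : 0 < γ)
    {𝓕 : Finset (Finset (Fin m × Fin m))} (h_loopless : ∀ E ∈ 𝓕, ∀ e ∈ E, e.1 ≠ e.2)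
    (H : ∀ E ∈ 𝓕, ∃ θ : QKParams d dk, ‖θ‖ ≤ 1 ∧ Recovers x θ.1.ofLp θ.2.1.ofLp θ.2.2 γ E) :
    (𝓕.card : ℝ) ≤ (1 + 3 / γ) ^ (2 * d * (∑ k, dk k) + 1) := by
  choose! θ hθ hrec using H
  have card_le := card_le_pow_finrank_of_separated (s := 𝓕) (f := θ) (c := 0) (R := 1)
    (ε := 2 * γ / 3) zero_le_one (by positivity) (fun E hE => by simpa using hθ E hE)
    fun E hE F hF hEF => by
      linarith [two_mul_margin_le_of_ne hx (hθ E hE) (hθ F hF) (hrec E hE) (hrec F hF)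
        (h_loopless E hE) (h_loopless F hF) hEF]
  have ratio : 2 * 1 / (2 * γ / 3) = 3 / γ := by field_simp
  rwa [ratio, QKParams.finrank_eq] at card_le

theorem choose_le_pow_of_forall_recovers (hx : ∀ v, √(∑ r, x v r ^ 2) ≤ 1) (hγ : 0 < γ) {m' : ℕ}
    (H : ∀ E : Finset (Fin m × Fin m), (∀ e ∈ E, e.1 ≠ e.2) → E.card = m' →
      ∃ (U V : ∀ k : Fin h, Matrix (Fin d) (Fin (dk k)) ℝ) (τ : ℝ),
        √(∑ k, frobSq (U k)) ≤ 1 ∧ √(∑ k, frobSq (V k)) ≤ 1 ∧ |τ| ≤ 1 ∧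
          Recovers x U V τ γ E) :
    ((m * (m - 1)).choose m' : ℝ) ≤ (1 + 3 / γ) ^ (2 * d * (∑ k, dk k) + 1) := by
  let 𝓕 : Finset (Finset (Fin m × Fin m)) := Finset.univ.offDiag.powersetCard m'
  have card_𝓕 : 𝓕.card = (m * (m - 1)).choose m' := by
    simp [𝓕, Finset.offDiag_card, Nat.mul_sub]
  have loopless (E) (hE : E ∈ 𝓕) : ∀ e ∈ E, e.1 ≠ e.2 := fun e he =>
    (Finset.mem_offDiag.1 ((Finset.mem_powersetCard.1 hE).1 he)).2.2
  have hx' (v) : ‖toLp 2 (x v)‖ ≤ 1 := by simpa [EuclideanSpace.norm_eq] using hx v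
  rw [← card_𝓕]
  refine card_le_pow_of_forall_recovers hx' hγ loopless fun E hE => ?_
  obtain ⟨U, V, τ, hU, hV, hτ, hrec⟩ := H E (loopless E hE) (Finset.mem_powersetCard.1 hE).2
  refine ⟨(toLp 2 U, toLp 2 V, τ), norm_prod_le_iff.2 ⟨?_, norm_prod_le_iff.2 ⟨?_, hτ⟩⟩, hrec⟩
  · rwa [HeadMatrices.norm_eq]
  · rwa [HeadMatrices.norm_eq]

end FrobeniusNorm

theorem log_div_sub_half_le_of_le_pow {b N : ℝ} {n : ℕ} (hb : 1 < b) (hN : 0 < N)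
    (h : N ≤ b ^ (2 * n + 1)) : 1 / (2 * Real.log b) * Real.log N - 1 / 2 ≤ n := by
  have hlog : Real.log N ≤ (2 * n + 1) * Real.log b := by
    simpa using Real.log_le_log hN h
  have hb_log : 0 < Real.log b := Real.log_pos hb
  rw [one_div_mul_eq_div, sub_le_iff_le_add, div_le_iff₀ (by positivity)]
  linarith

/-- **Description-length lower bound for the QK channel (precision-independent).**
There are `C' > 0` and, for each `γ ∈ (0,1)`, constants `c(γ) > 0` and `K(γ)` such that:
if some unit-norm embeddings `x_1,…,x_m ⊂ ℝ^d` allow every loop-free directed graph on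
`m` vertices with exactly `m'` edges to be recovered with margin `γ` by normalized QK
parameters with total key dimension `D_K = Σ_k dk k`, then
`binom(m(m−1), m') ≤ (C'/γ)^(2·d·D_K + 1)`, equivalently
`d·D_K ≥ c(γ)·log binom(m(m−1), m') − K(γ)`. -/
theorem stmt_13 :
    ∃ C' > (0 : ℝ), ∀ γ : ℝ, 0 < γ → γ < 1 → ∃ c > (0 : ℝ), ∃ K : ℝ,
      ∀ m m' d h : ℕ, 2 ≤ m → m' ≤ m * (m - 1) → 1 ≤ d → ∀ dk : Fin h → ℕ,
      ∀ x : Fin m → Fin d → ℝ, (∀ v, Real.sqrt (∑ r, x v r ^ 2) ≤ 1) →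
      (∀ E : Finset (Fin m × Fin m), (∀ e ∈ E, e.1 ≠ e.2) → E.card = m' →
        ∃ (U V : ∀ k : Fin h, Matrix (Fin d) (Fin (dk k)) ℝ) (τ : ℝ),
          Real.sqrt (∑ k, frobSq (U k)) ≤ 1 ∧
          Real.sqrt (∑ k, frobSq (V k)) ≤ 1 ∧
          |τ| ≤ 1 ∧ Recovers x U V τ γ E) →
      (((m * (m - 1)).choose m' : ℝ) ≤ (C' / γ) ^ (2 * d * (∑ k, dk k) + 1) ∧
        c * Real.log ((m * (m - 1)).choose m') - K ≤ (d * (∑ k, dk k) : ℝ)) := by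
  refine ⟨4, by norm_num, fun γ hγ hγ1 => ?_⟩
  have one_lt : 1 < 4 / γ := by rw [one_lt_div hγ]; linarith
  have log_pos : 0 < Real.log (4 / γ) := Real.log_pos one_lt
  refine ⟨1 / (2 * Real.log (4 / γ)), by positivity, 1 / 2, ?_⟩
  intro m m' d h _ hm' _ dk x hx H
  have base_le : 1 + 3 / γ ≤ 4 / γ := by
    rw [← sub_nonneg]
    have : 1 ≤ 1 / γ := one_le_one_div hγ hγ1.le
    linarith [show 4 / γ - (1 + 3 / γ) = 1 / γ - 1 by ring]
  have choose_le : ((m * (m - 1)).choose m' : ℝ) ≤ (4 / γ) ^ (2 * d * (∑ k, dk k) + 1) :=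
    (choose_le_pow_of_forall_recovers hx hγ H).trans (by gcongr)
  have choose_pos : (0 : ℝ) < (m * (m - 1)).choose m' := mod_cast Nat.choose_pos hm'
  refine ⟨choose_le, ?_⟩
  exact_mod_cast log_div_sub_half_le_of_le_pow one_lt choose_pos (mul_assoc 2 d _ ▸ choose_le)
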